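/- arXiv:2109.07771 — 5 statements merged into one kernel-verified Lean document; each statement's English description precedes it below -/
import Mathlib

section
/- Suppose every update message from peer node j ∈ J with sender timestamp s ∈ ℝ arrives at node i at a physical time at most s + 𝓛_ij and is assigned receive timestamp s + C̄_ij. Suppose node i responds to each user read request with timestamp t ∈ ℝ at a physical time T that is the least element satisfying: T ≥ t + O_i, and T is at least the arrival time of every update message whose receive timestamp is at most t. Then for every read request, T − t ≤ max(O_i, sup_{j ∈ J}(𝓛_ij − C̄_ij)), and hence the unavailability satisfies Ā_i ≤ max(O_i, sup_{j ∈ J}(𝓛_ij − C̄_ij)). (This is the CAL theorem: unavailability is, in the worst case, exactly this bound.) -/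
/-!
A response time exceeds its timestamp `t` by at most `b` as soon as the delay `b` is feasible, that
is, as soon as `t + b` satisfies both constraints on responses. A real `b` above the bound `B` is
feasible: a message received at logical time `s + c ≤ t` arrives by `s + L ≤ s + (b + c) ≤ t + b`.
Letting the real number `b` decrease to `B` gives the theorem, with no case distinction on whether
`B` is finite.
-/

/-- The physical times at which a node with processing offset `O` may respond to a read request
with timestamp `t`; the node's response time is the least of them. -/
def admissibleResponseTimes {J : Type*} {Msg : J → Type*} (O : EReal)
    (recvTs arrival : ∀ j, Msg j → ℝ) (t : ℝ) : Set ℝ :=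
  {T : ℝ | (t : EReal) + O ≤ (T : EReal) ∧
    ∀ (j : J) (m : Msg j), recvTs j m ≤ t → arrival j m ≤ T}

theorem arrival_le_add_of_latency_sub_le {a s c t b : ℝ} {L : EReal}
    (ha : (a : EReal) ≤ (s : EReal) + L) (hL : L - (c : EReal) ≤ (b : EReal))
    (hst : s + c ≤ t) : a ≤ t + b := by
  have hLbc : L ≤ ((b + c : ℝ) : EReal) := by
    rw [EReal.coe_add]
    exact EReal.sub_le_iff_le_add (.inl (EReal.coe_ne_bot c)) (.inl (EReal.coe_ne_top c)) |>.1 hL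
  have habc : a ≤ s + (b + c) := by
    exact_mod_cast ha.trans (add_le_add_right hLbc (s : EReal))
  linarith

section Response

variable {J : Type*} {𝓛 : J → EReal} {C : J → ℝ} {O : EReal} {Msg : J → Type*}
  {sender arrival recvTs : ∀ j, Msg j → ℝ}

theorem add_mem_admissibleResponseTimes
    (harrival : ∀ j m, (arrival j m : EReal) ≤ (sender j m : EReal) + 𝓛 j)
    (hrecvTs : ∀ j m, recvTs j m = sender j m + C j) {b : ℝ}
    (hO : O ≤ (b : EReal)) (h𝓛 : ∀ j, 𝓛 j - (C j : EReal) ≤ (b : EReal)) (t : ℝ) :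
    t + b ∈ admissibleResponseTimes O recvTs arrival t := by
  refine ⟨?_, fun j m hm => ?_⟩
  · rw [EReal.coe_add]
    exact add_le_add_right hO (t : EReal)
  · exact arrival_le_add_of_latency_sub_le (harrival j m) (h𝓛 j) (hrecvTs j m ▸ hm)

theorem sub_le_of_mem_lowerBounds_admissibleResponseTimes
    (harrival : ∀ j m, (arrival j m : EReal) ≤ (sender j m : EReal) + 𝓛 j)
    (hrecvTs : ∀ j m, recvTs j m = sender j m + C j) {t T : ℝ}
    (hT : T ∈ lowerBounds (admissibleResponseTimes O recvTs arrival t)) :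
    (T : EReal) - (t : EReal) ≤ max O (⨆ j, 𝓛 j - (C j : EReal)) := by
  refine EReal.le_of_forall_lt_iff_le.1 fun b hb => ?_
  obtain ⟨hO, h𝓛⟩ := max_le_iff.1 hb.le
  have hTtb : T ≤ t + b :=
    hT (add_mem_admissibleResponseTimes harrival hrecvTs hO (iSup_le_iff.1 h𝓛) t)
  exact_mod_cast sub_le_iff_le_add'.2 hTtb

end Response

theorem cal_theorem_general {J : Type*} (𝓛 : J → EReal) (C : J → ℝ) (O : EReal)
    (Msg : J → Type*) (sender arrival recvTs : ∀ j, Msg j → ℝ)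
    (harrival : ∀ j m, (arrival j m : EReal) ≤ (sender j m : EReal) + 𝓛 j)
    (hrecvTs : ∀ j m, recvTs j m = sender j m + C j)
    (Req : Type*) (ts resp : Req → ℝ)
    (hresp : ∀ r : Req, IsLeast (admissibleResponseTimes O recvTs arrival (ts r)) (resp r)) :
    (∀ r : Req, (resp r : EReal) - (ts r : EReal) ≤
        max O (⨆ j, 𝓛 j - (C j : EReal))) ∧
    (⨆ r : Req, (resp r : EReal) - (ts r : EReal)) ≤
        max O (⨆ j, 𝓛 j - (C j : EReal)) := by
  have hbound (r : Req) : (resp r : EReal) - (ts r : EReal) ≤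
      max O (⨆ j, 𝓛 j - (C j : EReal)) :=
    sub_le_of_mem_lowerBounds_admissibleResponseTimes harrival hrecvTs (hresp r).2
  exact ⟨hbound, iSup_le hbound⟩

/-- **The CAL theorem.**
Work in the extended reals `EReal`.  Fix a finite nonempty set `J` of peer nodes of a
node `i`, apparent latency bounds `𝓛 : J → EReal`, inconsistencies `C : J → ℝ` with
`C j ≥ 0`, and a processing offset `O ≥ 0`.  Update messages from peer `j` are an
index type `Msg j` with a sender timestamp, an arrival time, and a receive timestamp,
all in `ℝ`.  Suppose every update message from `j` with sender timestamp `s` arrives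
at node `i` at physical time at most `s + 𝓛 j` and is assigned receive timestamp
`s + C j`.  Suppose node `i` responds to each user read request with timestamp `t` at
the least physical time `T` satisfying: `T ≥ t + O`, and `T` is at least the arrival
time of every update message whose receive timestamp is at most `t`.  Then for every
read request, `T − t ≤ max(O, ⨆ j, (𝓛 j − C j))`, and hence the unavailability — the
supremum over read requests of response time minus request timestamp — satisfies
`Ā ≤ max(O, ⨆ j, (𝓛 j − C j))`. -/
theorem cal_theorem {J : Type*} [Fintype J] [Nonempty J]
    (𝓛 : J → EReal) (C : J → ℝ) (hC : ∀ j, 0 ≤ C j)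
    (O : EReal) (hO : 0 ≤ O)
    (Msg : J → Type*)
    (sender arrival recvTs : ∀ j, Msg j → ℝ)
    (harrival : ∀ j m, (arrival j m : EReal) ≤ (sender j m : EReal) + 𝓛 j)
    (hrecvTs : ∀ j m, recvTs j m = sender j m + C j)
    (Req : Type*) (ts resp : Req → ℝ)
    (hresp : ∀ r : Req, IsLeast
      {T : ℝ | (ts r : EReal) + O ≤ (T : EReal) ∧
        ∀ (j : J) (m : Msg j), recvTs j m ≤ ts r → arrival j m ≤ T}
      (resp r)) :
    (∀ r : Req, (resp r : EReal) - (ts r : EReal) ≤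
        max O (⨆ j, 𝓛 j - (C j : EReal))) ∧
    (⨆ r : Req, (resp r : EReal) - (ts r : EReal)) ≤
        max O (⨆ j, 𝓛 j - (C j : EReal)) :=
  cal_theorem_general 𝓛 C O Msg sender arrival recvTs harrival hrecvTs Req ts resp hresp
end

section
/- Let N be a finite type, Γ : N → N → EReal, and Z : N → EReal. Suppose O : N → EReal satisfies the max-plus fixed-point equation O_i = max(Z_i, sup_{j ∈ N}(Γ_{ij} + O_j)) for all i ∈ N, and suppose there is a cycle i_0, i_1, …, i_m = i_0 (m ≥ 1) whose edge weights Γ_{i_{k+1} i_k} are all finite reals with positive total weight Σ_{k=0}^{m−1} Γ_{i_{k+1} i_k} > 0. Then O_{i_0} ∈ {−∞, +∞}; and if moreover Z_{i_0} > −∞, then O_{i_0} = +∞. In particular, if Z_i ≥ 0 for all nodes on a positive-weight cycle, every solution assigns those nodes infinite processing offsets: with zero inconsistency on a positive-weight cycle, every node must wait forever. -/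
/-!
Traversing an edge from `j` to `i` gives `Γ i j + O j ≤ O i`, so going once around a cycle of total
weight `w` gives `w + O (c 0) ≤ O (c 0)`. For `w > 0` this is impossible when `O (c 0)` is a real
number, and a lower bound `⊥ < Z (c 0)` excludes `⊥`.
-/

theorem sum_range_add_le_of_forall_add_le_succ {M : Type*} [AddCommMonoid M] [Preorder M]
    [AddLeftMono M] {w u : ℕ → M} {m : ℕ} (h : ∀ k < m, w k + u k ≤ u (k + 1)) :
    (∑ k ∈ Finset.range m, w k) + u 0 ≤ u m := by
  induction m with
  | zero => simp
  | succ m ih =>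
    calc (∑ k ∈ Finset.range (m + 1), w k) + u 0
        = w m + ((∑ k ∈ Finset.range m, w k) + u 0) := by
          rw [Finset.sum_range_succ_comm, add_assoc]
      _ ≤ w m + u m := by
          gcongr
          exact ih fun k hk => h k (hk.trans m.lt_succ_self)
      _ ≤ u (m + 1) := h m m.lt_succ_self

theorem eq_bot_or_eq_top_of_pos_of_add_le_self {w x : EReal} (hw : 0 < w) (h : w + x ≤ x) :
    x = ⊥ ∨ x = ⊤ := by
  induction x with
  | bot => exact .inl rfl
  | top => exact .inr rfl
  | coe r =>
    have hlt : (r : EReal) < w + r := by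
      simpa using EReal.add_lt_add_right_coe hw r
    exact absurd h hlt.not_ge

@[norm_cast]
theorem ereal_coe_sum {ι : Type*} (s : Finset ι) (f : ι → ℝ) :
    ((∑ i ∈ s, f i : ℝ) : EReal) = ∑ i ∈ s, (f i : EReal) :=
  map_sum (⟨⟨Real.toEReal, EReal.coe_zero⟩, EReal.coe_add⟩ : ℝ →+ EReal) f s

theorem positive_cycle_infinite_offset_general {N : Type*} {Γ : N → N → EReal} {Z O : N → EReal}
    (hO : ∀ i, max (Z i) (⨆ j, Γ i j + O j) ≤ O i) {m : ℕ} {c : ℕ → N} (hcycle : c m = c 0)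
    (hpos : 0 < ∑ k ∈ Finset.range m, Γ (c (k + 1)) (c k)) :
    (O (c 0) = ⊥ ∨ O (c 0) = ⊤) ∧ (⊥ < Z (c 0) → O (c 0) = ⊤) := by
  have edge_le (i j : N) : Γ i j + O j ≤ O i :=
    (le_iSup (fun j => Γ i j + O j) j).trans ((le_max_right _ _).trans (hO i))
  have cycle_le : (∑ k ∈ Finset.range m, Γ (c (k + 1)) (c k)) + O (c 0) ≤ O (c 0) := by
    simpa only [hcycle] using
      sum_range_add_le_of_forall_add_le_succ (u := fun k => O (c k)) (m := m)
        fun k _ => edge_le (c (k + 1)) (c k)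
  have infinite := eq_bot_or_eq_top_of_pos_of_add_le_self hpos cycle_le
  refine ⟨infinite, fun hZ => infinite.resolve_left ?_⟩
  exact (hZ.trans_le ((le_max_left _ _).trans (hO (c 0)))).ne'

/-- **Positive-weight cycles force infinite processing offsets.**
Work in the extended reals `EReal` with max-plus conventions (`−∞` absorbing for
addition).  Let `N` be finite, `Γ : N → N → EReal`, `Z : N → EReal`, and suppose
`O : N → EReal` satisfies the max-plus fixed-point equation
`O i = max (Z i) (⨆ j, Γ i j + O j)` for all `i`.  Suppose there is a cycle
`c 0, c 1, …, c m = c 0` (`m ≥ 1`) whose edge weights `Γ (c (k+1)) (c k)` are all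
finite reals `γ k`, with positive total weight `∑_{k<m} γ k > 0`.  Then
`O (c 0) ∈ {−∞, +∞}`; and if moreover `Z (c 0) > −∞`, then `O (c 0) = +∞`. -/
theorem positive_cycle_infinite_offset {N : Type*} [Fintype N]
    (Γ : N → N → EReal) (Z O : N → EReal)
    (hO : ∀ i, O i = max (Z i) (⨆ j, Γ i j + O j))
    (m : ℕ) (hm : 1 ≤ m) (c : ℕ → N) (hcycle : c m = c 0)
    (γ : ℕ → ℝ) (hγ : ∀ k < m, Γ (c (k + 1)) (c k) = (γ k : EReal))
    (hpos : 0 < ∑ k ∈ Finset.range m, γ k) :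
    (O (c 0) = ⊥ ∨ O (c 0) = ⊤) ∧ (⊥ < Z (c 0) → O (c 0) = ⊤) := by
  refine positive_cycle_infinite_offset_general (fun i => (hO i).ge) hcycle ?_
  rw [Finset.sum_congr rfl fun k hk => hγ k (Finset.mem_range.mp hk)]
  exact_mod_cast hpos
end

section
/- Let N be a finite type and Γ : N → N → ℝ ∪ {−∞} a matrix such that every cycle has weight strictly less than 0 (for every sequence i_0, i_1, …, i_m = i_0 with m ≥ 1, Σ_{k=0}^{m−1} Γ_{i_{k+1} i_k} < 0, where a sum involving −∞ is −∞). Then for every b : N → ℝ ∪ {−∞}, the max-plus equation x_i = max(b_i, sup_{j ∈ N}(Γ_{ij} + x_j)) (for all i ∈ N) has exactly one solution x : N → ℝ ∪ {−∞}. -/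
/-!
If `y i < x i` forces `x i ≤ Γ i j + x j` for some `j` with `y j < x j` again, then following these
indices in a finite set closes up to a cycle of weight at least `0`. Hence `x ≤ y`. Applied to a
sub- and a supersolution, this gives uniqueness.

For existence, columns of `Γ` are switched on one at a time. If `y` solves the system with columns
`S`, adding column `a` does not change the `a`-th coordinate, because a better value would have to
return to `a` along a cycle of nonnegative weight. So `Γ i a + y a` may be absorbed into `b`, and
the resulting system again involves only the columns `S`.
-/

namespace MaxPlus

variable {N G : Type*} [AddCommMonoid G] [LinearOrder G]

/-- Every cycle of the weighted digraph `Γ` with vertices in `s` has negative weight; `Γ i j` is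
the weight of the edge from `j` to `i`. -/
def NegCyclesOn (Γ : N → N → WithBot G) (s : Set N) : Prop :=
  ∀ m : ℕ, 1 ≤ m → ∀ c : ℕ → N, (∀ k, c k ∈ s) → c m = c 0 →
    ∑ k ∈ Finset.range m, Γ (c (k + 1)) (c k) < 0

/-- The max-plus matrix-vector product `Γ ⊗ x` in which only the columns in `S` contribute. Keeping
`S` a parameter is what allows columns to be eliminated one by one. -/
def mulVec (Γ : N → N → WithBot G) (S : Finset N) (x : N → WithBot G) : N → WithBot G :=
  fun i => S.sup fun j => Γ i j + x j

variable {Γ : N → N → WithBot G} {S : Finset N} {b x y : N → WithBot G} {i j a : N}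

theorem NegCyclesOn.mono {s t : Set N} (ht : NegCyclesOn Γ t) (hst : s ⊆ t) : NegCyclesOn Γ s :=
  fun m hm c hc => ht m hm c fun k => hst (hc k)

theorem add_le_mulVec (hj : j ∈ S) : Γ i j + x j ≤ mulVec Γ S x i :=
  Finset.le_sup (f := fun j => Γ i j + x j) hj

theorem mulVec_cons (ha : a ∉ S) :
    mulVec Γ (S.cons a ha) x = (fun i => Γ i a + x a) ⊔ mulVec Γ S x :=
  funext fun _ => Finset.sup_cons ha

theorem le_sum_range_add {M : Type*} [AddCommMonoid M] [Preorder M] [AddLeftMono M]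
    {u w : ℕ → M} {m : ℕ} (h : ∀ k < m, u (k + 1) ≤ w k + u k) :
    u m ≤ ∑ k ∈ Finset.range m, w k + u 0 := by
  induction m with
  | zero => simp
  | succ m ih =>
    calc u (m + 1) ≤ w m + u m := h m m.lt_succ_self
      _ ≤ w m + (∑ k ∈ Finset.range m, w k + u 0) := by
        gcongr
        exact ih fun k hk => h k (hk.trans m.lt_succ_self)
      _ = ∑ k ∈ Finset.range (m + 1), w k + u 0 := by
        rw [Finset.sum_range_succ_comm, add_assoc]

theorem periodicPts_nonempty {α : Type*} [Finite α] [Nonempty α] (f : α → α) :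
    (Function.periodicPts f).Nonempty := by
  obtain ⟨a⟩ := ‹Nonempty α›
  obtain ⟨m, n, hmn, h⟩ : ∃ m n, m < n ∧ f^[m] a = f^[n] a := by
    by_contra! h
    exact not_injective_infinite_finite (fun n => f^[n] a) (.of_lt_imp_ne h)
  refine ⟨f^[m] a, Function.mk_mem_periodicPts (Nat.sub_pos_of_lt hmn) ?_⟩
  rw [Function.IsPeriodicPt, Function.IsFixedPt, ← Function.iterate_add_apply,
    Nat.sub_add_cancel hmn.le, h]

variable [IsOrderedCancelAddMonoid G]

theorem NegCyclesOn.exists_forall_add_lt {s : Set N} (hΓ : NegCyclesOn Γ s) (hfin : s.Finite)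
    (hne : s.Nonempty) (hx : ∀ i ∈ s, x i ≠ ⊥) : ∃ i ∈ s, ∀ j ∈ s, Γ i j + x j < x i := by
  by_contra! h
  have hnext : ∀ i : s, ∃ j : s, x i ≤ Γ i j + x j := fun i =>
    let ⟨j, hj, hij⟩ := h i i.2
    ⟨⟨j, hj⟩, hij⟩
  choose next hnext using hnext
  have := hfin.to_subtype
  have := hne.to_subtype
  obtain ⟨i, m, hm, hi⟩ := periodicPts_nonempty next
  -- `next` runs against the edges, so the cycle is its orbit traversed backwards.
  let c : ℕ → s := fun k => next^[m - k] i
  have hc : c m = c 0 := by simp [c, hi.eq]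
  have hstep : ∀ k < m, x (c (k + 1)) ≤ Γ (c (k + 1)) (c k) + x (c k) := fun k hk => by
    have hpred : c k = next (c (k + 1)) := by
      rw [← Function.iterate_succ_apply' next, ← Nat.sub_sub, Nat.succ_eq_add_one,
        Nat.sub_add_cancel (Nat.sub_pos_of_lt hk)]
    rw [hpred]
    exact hnext _
  have hlt := WithBot.add_lt_add_right (hx _ (c 0).2)
    (hΓ m hm (fun k => c k) (fun k => (c k).2) (congrArg Subtype.val hc))
  have hle := le_sum_range_add (u := fun k => x (c k)) hstep
  rw [hc] at hle
  exact hle.not_gt (hlt.trans_eq (zero_add _))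

theorem NegCyclesOn.le_of_forall_lt_exists (hΓ : NegCyclesOn Γ S)
    (h : ∀ i, y i < x i → ∃ j ∈ S, y j < x j ∧ x i ≤ Γ i j + x j) : x ≤ y := by
  intro i
  by_contra! hi
  obtain ⟨j, hjS, hj, -⟩ := h i hi
  obtain ⟨k, ⟨-, hk⟩, hmax⟩ := (hΓ.mono (Set.sep_subset _ _)).exists_forall_add_lt
    (S.finite_toSet.sep fun i => y i < x i) ⟨j, hjS, hj⟩ fun _ hi => hi.2.ne_bot
  obtain ⟨l, hlS, hl, hkl⟩ := h k hk
  exact hkl.not_gt (hmax l ⟨hlS, hl⟩)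

theorem exists_lt_of_lt_mulVec (hy : mulVec Γ S y i ≤ y i) (hi : y i < mulVec Γ S x i) :
    ∃ j ∈ S, y j < x j ∧ mulVec Γ S x i = Γ i j + x j := by
  have hS : S.Nonempty := by
    by_contra! hS
    simp [mulVec, hS] at hi
  obtain ⟨j, hj, hmax⟩ := S.exists_mem_eq_sup hS fun j => Γ i j + x j
  refine ⟨j, hj, lt_of_not_ge fun hxy => hi.not_ge ?_, hmax⟩
  calc mulVec Γ S x i = Γ i j + x j := hmax
    _ ≤ Γ i j + y j := by gcongr
    _ ≤ mulVec Γ S y i := add_le_mulVec hj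
    _ ≤ y i := hy

theorem NegCyclesOn.le_of_subsolution_of_supersolution (hΓ : NegCyclesOn Γ S)
    (hx : x ≤ b ⊔ mulVec Γ S x) (hy : b ⊔ mulVec Γ S y ≤ y) : x ≤ y := by
  obtain ⟨hby, hΓy⟩ := sup_le_iff.1 hy
  refine hΓ.le_of_forall_lt_exists fun i hi => ?_
  have hxi : x i ≤ mulVec Γ S x i := (le_sup_iff.1 (hx i)).resolve_left ((hby i).trans_lt hi).not_ge
  obtain ⟨j, hj, hlt, hmax⟩ := exists_lt_of_lt_mulVec (hΓy i) (hi.trans_le hxi)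
  exact ⟨j, hj, hlt, hxi.trans_eq hmax⟩

theorem NegCyclesOn.apply_eq_of_absorb_column {ha : a ∉ S} (hΓ : NegCyclesOn Γ (S.cons a ha))
    (hy : y = b ⊔ mulVec Γ S y) (hx : x = (b ⊔ fun i => Γ i a + y a) ⊔ mulVec Γ S x) :
    x a = y a := by
  have hS : S ⊆ S.cons a ha := Finset.subset_cons ha
  obtain ⟨hby, hΓy⟩ := sup_le_iff.1 hy.ge
  apply le_antisymm
  · by_contra! hlt
    refine hlt.not_ge (hΓ.le_of_forall_lt_exists (fun i hi => ?_) a)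
    rcases le_sup_iff.1 (hx.le i) with hxi | hxi
    · have hcol : x i ≤ Γ i a + y a :=
        (le_sup_iff.1 hxi).resolve_left ((hby i).trans_lt hi).not_ge
      exact ⟨a, Finset.mem_cons_self a S, hlt, hcol.trans (by gcongr)⟩
    · obtain ⟨j, hj, hji, hmax⟩ := exists_lt_of_lt_mulVec (hΓy i) (hi.trans_le hxi)
      exact ⟨j, hS hj, hji, hxi.trans_eq hmax⟩
  · have hsuper : b ⊔ mulVec Γ S x ≤ x :=
      (sup_le_sup_right le_sup_left _).trans hx.ge
    exact (hΓ.mono (Finset.coe_subset.2 hS)).le_of_subsolution_of_supersolution hy.le hsuper a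

theorem NegCyclesOn.exists_eq_sup_mulVec (hΓ : NegCyclesOn Γ S) (b : N → WithBot G) :
    ∃ x, x = b ⊔ mulVec Γ S x := by
  induction S using Finset.cons_induction generalizing b with
  | empty => exact ⟨b, (sup_eq_left.2 fun _ => bot_le).symm⟩
  | cons a S ha ih =>
    have hS := hΓ.mono (Finset.coe_subset.2 (Finset.subset_cons ha))
    obtain ⟨y, hy⟩ := ih hS b
    obtain ⟨x, hx⟩ := ih hS (b ⊔ fun i => Γ i a + y a)
    refine ⟨x, ?_⟩
    rwa [mulVec_cons, hΓ.apply_eq_of_absorb_column hy hx, ← sup_assoc]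

end MaxPlus

open MaxPlus in
theorem maxplus_unique_solution_general {N G : Type*} [AddCommMonoid G] [LinearOrder G]
    [IsOrderedCancelAddMonoid G] {Γ : N → N → WithBot G} {S : Finset N} (hΓ : NegCyclesOn Γ S)
    (b : N → WithBot G) :
    ∃! x : N → WithBot G, x = b ⊔ mulVec Γ S x :=
  existsUnique_of_exists_of_unique (hΓ.exists_eq_sup_mulVec b) fun _ _ hx hy =>
    le_antisymm (hΓ.le_of_subsolution_of_supersolution hx.le hy.ge)
      (hΓ.le_of_subsolution_of_supersolution hy.le hx.ge)

/-- **Unique solution of `x = b ⊕ Γ x` when all cycle weights are negative.**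
Work in the max-plus algebra over `ℝ ∪ {−∞}` (= `WithBot ℝ`): `⊕` is the binary
maximum, `⊗` is ordinary addition with `−∞` absorbing.  Let `N` be a finite type and
`Γ : N → N → WithBot ℝ` a matrix such that every cycle has weight strictly less than
`0`: for every sequence `i_0, i_1, …, i_m = i_0` with `m ≥ 1`, the weight
`∑_{k<m} Γ (i_{k+1}) (i_k)` is `< 0`.  Then for every `b : N → WithBot ℝ`, the
max-plus equation `x i = max (b i) (⨆ j, Γ i j + x j)` (for all `i`) has exactly one
solution `x : N → WithBot ℝ`. -/
theorem maxplus_unique_solution {N : Type*} [Fintype N]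
    (Γ : N → N → WithBot ℝ)
    (hcyc : ∀ (m : ℕ), 1 ≤ m → ∀ c : ℕ → N, c m = c 0 →
      (∑ k ∈ Finset.range m, Γ (c (k + 1)) (c k)) < 0)
    (b : N → WithBot ℝ) :
    ∃! x : N → WithBot ℝ,
      ∀ i, x i = max (b i) (Finset.univ.sup fun j => Γ i j + x j) := by
  have hΓ : MaxPlus.NegCyclesOn Γ (Finset.univ : Finset N) := fun m hm c _ => hcyc m hm c
  simpa only [funext_iff, Pi.sup_apply, MaxPlus.mulVec] using maxplus_unique_solution_general hΓ b
end

section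
/- Let N be a finite type of cardinality n ≥ 1 and Γ : N → N → ℝ ∪ {−∞} a matrix such that every cycle has weight at most 0. For b : N → ℝ ∪ {−∞}, define x_i = max(b_i, sup over all paths p from some j to i of (weight(p) + b_j)), where the supremum over paths is attained (or equivalently may be restricted to paths of length at most n − 1). Then x satisfies the max-plus equation x_i = max(b_i, sup_{j ∈ N}(Γ_{ij} + x_j)) for all i ∈ N; that is, x = Γ* ⊗ b is a solution of x = b ⊕ Γ x whenever all cycle weights are nonpositive. -/
/-!
The weights `weight(p) + b (start p)` of the walks `p` of length `m + 1` into `i` are exactly the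
`Γ i j + w`, where `w` runs over the corresponding values for length `m` at `j`.  Hence the family
of value sets over all lengths already satisfies `x = b ⊕ Γ x` as sets, and taking greatest elements
gives the equation.  Bounding the length by the number of vertices does not change the greatest
element: a walk with at least that many steps revisits a vertex, and excising the cycle in between
does not decrease its weight, because cycles have nonpositive weight.
-/

open Finset

section Walks

variable {N R : Type*} [AddCommMonoid R] {Γ : N → N → R} {b : N → R} {c : ℕ → N} {i : N}

/-- The weight of the walk `c 0 → c 1 → ⋯ → c m` in the weighted digraph of `Γ`. A walk is encoded
by an infinite sequence of vertices together with its length `m`; entries beyond `c m` are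
irrelevant, and the entry `Γ i j` weights the edge from `j` to `i`. -/
def walkWeight (Γ : N → N → R) (c : ℕ → N) (m : ℕ) : R :=
  ∑ k ∈ range m, Γ (c (k + 1)) (c k)

lemma walkWeight_zero (Γ : N → N → R) (c : ℕ → N) : walkWeight Γ c 0 = 0 :=
  sum_range_zero _

lemma walkWeight_succ (Γ : N → N → R) (c : ℕ → N) (m : ℕ) :
    walkWeight Γ c (m + 1) = Γ (c (m + 1)) (c m) + walkWeight Γ c m :=
  sum_range_succ_comm _ m

lemma walkWeight_add (Γ : N → N → R) (c : ℕ → N) (p q : ℕ) :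
    walkWeight Γ c (p + q) = walkWeight Γ c p + walkWeight Γ (fun k ↦ c (p + k)) q :=
  sum_range_add _ p q

lemma walkWeight_congr {c' : ℕ → N} {m : ℕ} (h : ∀ k ≤ m, c k = c' k) :
    walkWeight Γ c m = walkWeight Γ c' m :=
  sum_congr rfl fun k hk ↦ by
    rw [h k (mem_range.1 hk).le, h (k + 1) (mem_range.1 hk)]

/-- The walk `c` with the `d` steps from `c p` to `c (p + d)` left out. These steps should form a
cycle, since otherwise the result jumps from `c p` to `c (p + d + 1)`. -/
def exciseWalk (c : ℕ → N) (p d : ℕ) : ℕ → N :=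
  fun k ↦ if k ≤ p then c k else c (k + d)

lemma exciseWalk_of_le {p k : ℕ} (d : ℕ) (hk : k ≤ p) : exciseWalk c p d k = c k :=
  if_pos hk

lemma exciseWalk_add {p d : ℕ} (hc : c (p + d) = c p) (k : ℕ) :
    exciseWalk c p d (p + k) = c (p + d + k) := by
  rcases k.eq_zero_or_pos with rfl | hk
  · exact (exciseWalk_of_le d le_rfl).trans hc.symm
  · rw [exciseWalk, if_neg (by lia), add_right_comm]

lemma walkWeight_eq_cycle_add_exciseWalk {p d : ℕ} (hc : c (p + d) = c p) (r : ℕ) :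
    walkWeight Γ c (p + d + r) =
      walkWeight Γ (fun k ↦ c (p + k)) d + walkWeight Γ (exciseWalk c p d) (p + r) := by
  have hhead : walkWeight Γ (exciseWalk c p d) p = walkWeight Γ c p :=
    walkWeight_congr fun _ ↦ exciseWalk_of_le d
  rw [walkWeight_add, walkWeight_add, walkWeight_add, hhead]
  simp only [exciseWalk_add hc]
  ac_rfl

/-- Every cycle of positive length in the weighted digraph of `Γ` has weight at most `0`. For a
finite vertex type, the Kleene star of `Γ` is then attained on walks of bounded length. -/
def CyclesNonpos [LE R] (Γ : N → N → R) : Prop :=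
  ∀ m, 1 ≤ m → ∀ c : ℕ → N, c m = c 0 → walkWeight Γ c m ≤ 0

/-- The terms `weight(p) + b j` of `(Γ ^ m ⊗ b) i` in the max-plus algebra, where `p` runs over the
walks of length `m` from some `j` to `i`. -/
def walkValues (Γ : N → N → R) (b : N → R) (m : ℕ) (i : N) : Set R :=
  {w | ∃ c : ℕ → N, c m = i ∧ w = walkWeight Γ c m + b (c 0)}

lemma walkValues_zero (Γ : N → N → R) (b : N → R) (i : N) : walkValues Γ b 0 i = {b i} := by
  ext w
  constructor
  · rintro ⟨c, rfl, rfl⟩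
    rw [walkWeight_zero, zero_add, Set.mem_singleton_iff]
  · rintro rfl
    exact ⟨fun _ ↦ i, rfl, by rw [walkWeight_zero, zero_add]⟩

lemma mem_walkValues_succ {m : ℕ} {w : R} :
    w ∈ walkValues Γ b (m + 1) i ↔ ∃ j, ∃ v ∈ walkValues Γ b m j, w = Γ i j + v := by
  constructor
  · rintro ⟨c, rfl, rfl⟩
    exact ⟨c m, _, ⟨c, rfl, rfl⟩, by rw [walkWeight_succ, add_assoc]⟩
  · rintro ⟨_, _, ⟨c, rfl, rfl⟩, rfl⟩
    have hagree : ∀ k ≤ m, Function.update c (m + 1) i k = c k :=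
      fun k hk ↦ Function.update_of_ne (by lia) _ _
    refine ⟨Function.update c (m + 1) i, Function.update_self .., ?_⟩
    rw [walkWeight_succ, walkWeight_congr hagree, Function.update_self, hagree m le_rfl,
      hagree 0 m.zero_le, add_assoc]

lemma biUnion_walkValues_lt (Γ : N → N → R) (b : N → R) (i : N) {n : ℕ} (hn : 1 ≤ n) :
    ⋃ m < n, walkValues Γ b m i =
      {w | w = b i ∨ ∃ m, 1 ≤ m ∧ m ≤ n - 1 ∧ w ∈ walkValues Γ b m i} := by
  ext w
  simp only [Set.mem_iUnion, exists_prop, Set.mem_ofPred_eq]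
  constructor
  · rintro ⟨_ | m, hm, hw⟩
    · exact .inl (by rwa [walkValues_zero] at hw)
    · exact .inr ⟨m + 1, by lia, by lia, hw⟩
  · rintro (rfl | ⟨m, -, hm, hw⟩)
    · exact ⟨0, hn, by rw [walkValues_zero]; rfl⟩
    · exact ⟨m, by lia, hw⟩

lemma eq_sup_of_isGreatest_iUnion_walkValues [Fintype N] [SemilatticeSup R] [OrderBot R]
    [IsOrderedAddMonoid R] {x : N → R} (hx : ∀ i, IsGreatest (⋃ m, walkValues Γ b m i) (x i))
    (i : N) : x i = b i ⊔ univ.sup fun j ↦ Γ i j + x j := by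
  apply le_antisymm
  · obtain ⟨_ | m, hm⟩ := Set.mem_iUnion.1 (hx i).1
    · rw [walkValues_zero] at hm
      exact le_sup_of_le_left hm.le
    · obtain ⟨j, v, hv, hxi⟩ := mem_walkValues_succ.1 hm
      have hvx : v ≤ x j := (hx j).2 (Set.mem_iUnion_of_mem m hv)
      calc
        x i = Γ i j + v := hxi
        _ ≤ Γ i j + x j := by gcongr
        _ ≤ univ.sup fun j ↦ Γ i j + x j := le_sup (f := fun j ↦ Γ i j + x j) (mem_univ j)
        _ ≤ _ := le_sup_right
  · refine sup_le ((hx i).2 (Set.mem_iUnion_of_mem 0 ?_)) (Finset.sup_le fun j _ ↦ ?_)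
    · rw [walkValues_zero]
      rfl
    · obtain ⟨m, hm⟩ := Set.mem_iUnion.1 (hx j).1
      exact (hx i).2 (Set.mem_iUnion_of_mem (m + 1) (mem_walkValues_succ.2 ⟨j, x j, hm, rfl⟩))

end Walks

section FiniteVertices

lemma exists_cycle_of_card_le {N : Type*} [Fintype N] {m : ℕ} (hm : Fintype.card N ≤ m)
    (c : ℕ → N) : ∃ p d r, 1 ≤ d ∧ m = p + d + r ∧ c (p + d) = c p := by
  have hcard : #(univ : Finset N) < #(range (m + 1)) := by
    rw [card_range]
    exact Nat.lt_succ_of_le hm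
  obtain ⟨u, hu, v, hv, huv, hc⟩ :=
    exists_ne_map_eq_of_card_lt_of_maps_to hcard (f := c) fun k _ ↦ mem_univ (c k)
  wlog hlt : u < v generalizing u v
  · exact this v hv u hu huv.symm hc.symm (by lia)
  have := mem_range.1 hv
  exact ⟨u, v - u, m - v, by lia, by lia, by rw [Nat.add_sub_of_le hlt.le, hc]⟩

variable {N R : Type*} [Fintype N] [AddCommMonoid R] {Γ : N → N → R} {b : N → R}

lemma CyclesNonpos.exists_shorter_walk [Preorder R] [IsOrderedAddMonoid R] (hΓ : CyclesNonpos Γ)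
    {m : ℕ} (hm : Fintype.card N ≤ m) (c : ℕ → N) :
    ∃ m' < m, ∃ c' : ℕ → N,
      c' 0 = c 0 ∧ c' m' = c m ∧ walkWeight Γ c m ≤ walkWeight Γ c' m' := by
  obtain ⟨p, d, r, hd, rfl, hc⟩ := exists_cycle_of_card_le hm c
  refine ⟨p + r, by lia, exciseWalk c p d, exciseWalk_of_le d p.zero_le, exciseWalk_add hc r, ?_⟩
  rw [walkWeight_eq_cycle_add_exciseWalk hc]
  exact add_le_of_nonpos_left (hΓ d hd _ hc)

lemma CyclesNonpos.exists_mem_walkValues_lt_card [Preorder R] [IsOrderedAddMonoid R]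
    (hΓ : CyclesNonpos Γ) {m : ℕ} {i : N} {w : R} (hw : w ∈ walkValues Γ b m i) :
    ∃ m' < Fintype.card N, ∃ w' ∈ walkValues Γ b m' i, w ≤ w' := by
  induction m using Nat.strong_induction_on generalizing w with
  | _ m ih =>
    obtain hm | hm := lt_or_ge m (Fintype.card N)
    · exact ⟨m, hm, w, hw, le_rfl⟩
    obtain ⟨c, rfl, rfl⟩ := hw
    obtain ⟨l, hl, c', hstart, hend, hle⟩ := hΓ.exists_shorter_walk hm c
    obtain ⟨m', hm', w', hw', hle'⟩ := ih l hl ⟨c', hend, rfl⟩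
    refine ⟨m', hm', w', hw', le_trans ?_ hle'⟩
    rw [hstart]
    gcongr

lemma CyclesNonpos.isGreatest_iUnion_walkValues [Preorder R] [IsOrderedAddMonoid R]
    (hΓ : CyclesNonpos Γ) {n : ℕ} (hn : Fintype.card N ≤ n) {i : N} {a : R}
    (ha : IsGreatest (⋃ m < n, walkValues Γ b m i) a) :
    IsGreatest (⋃ m, walkValues Γ b m i) a := by
  refine ⟨Set.iUnion₂_subset_iUnion _ _ ha.1, fun w hw ↦ ?_⟩
  obtain ⟨m, hm⟩ := Set.mem_iUnion.1 hw
  obtain ⟨m', hm', w', hw', hle⟩ := hΓ.exists_mem_walkValues_lt_card hm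
  exact hle.trans (ha.2 (Set.mem_biUnion (hm'.trans_le hn) hw'))

theorem maxplus_star_solves_general [SemilatticeSup R] [OrderBot R] [IsOrderedAddMonoid R]
    {n : ℕ} (hn : Fintype.card N ≤ n) (hΓ : CyclesNonpos Γ) {x : N → R}
    (hx : ∀ i, IsGreatest (⋃ m < n, walkValues Γ b m i) (x i)) (i : N) :
    x i = b i ⊔ univ.sup fun j ↦ Γ i j + x j :=
  eq_sup_of_isGreatest_iUnion_walkValues (fun j ↦ hΓ.isGreatest_iUnion_walkValues hn (hx j)) i

end FiniteVertices

/-- **`x = Γ* ⊗ b` solves `x = b ⊕ Γ x` when all cycle weights are nonpositive.**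
Work in the max-plus algebra over `ℝ ∪ {−∞}` (= `WithBot ℝ`): `⊕` is the binary
maximum, `⊗` is ordinary addition with `−∞` absorbing.  Let `N` be a finite type of
cardinality `n ≥ 1` and `Γ : N → N → WithBot ℝ` a matrix such that every cycle has
weight at most `0`.  For `b : N → WithBot ℝ`, let `x i` be the maximum of `b i` and
the weights `weight(p) + b j` over all paths `p` from some `j` to `i` of length at
most `n − 1` (over which the supremum over all paths is attained); i.e. `x i` is the
greatest element of the set
`{b i} ∪ {weight(p) + b (start p) | p a path to i of length 1 ≤ m ≤ n − 1}`.
Then `x` satisfies `x i = max (b i) (⨆ j, Γ i j + x j)` for all `i`: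
`x = Γ* ⊗ b` is a solution of `x = b ⊕ Γ x`. -/
theorem maxplus_star_solves {N : Type*} [Fintype N]
    (n : ℕ) (hn : n = Fintype.card N) (hn1 : 1 ≤ n)
    (Γ : N → N → WithBot ℝ)
    (hcyc : ∀ (m : ℕ), 1 ≤ m → ∀ c : ℕ → N, c m = c 0 →
      (∑ k ∈ Finset.range m, Γ (c (k + 1)) (c k)) ≤ 0)
    (b : N → WithBot ℝ) (x : N → WithBot ℝ)
    (hx : ∀ i, IsGreatest
      {w : WithBot ℝ | w = b i ∨
        ∃ m : ℕ, 1 ≤ m ∧ m ≤ n - 1 ∧ ∃ c : ℕ → N, c m = i ∧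
          w = (∑ k ∈ Finset.range m, Γ (c (k + 1)) (c k)) + b (c 0)}
      (x i)) :
    ∀ i, x i = max (b i) (Finset.univ.sup fun j => Γ i j + x j) :=
  maxplus_star_solves_general hn.ge hcyc fun i ↦ biUnion_walkValues_lt Γ b i hn1 ▸ hx i
end

section
/- Let N be a finite type of cardinality n ≥ 1 and Γ : N → N → ℝ ∪ {−∞} a matrix such that every cycle has weight at most 0. Then for all i, j ∈ N, the supremum over ALL paths from j to i of the path weight equals the maximum over paths from j to i of length at most n − 1 of the path weight (both being −∞ if no path exists). Equivalently, the Kleene star Γ* = I ⊕ Γ ⊕ Γ² ⊕ ⋯ reduces to the finite sum Γ* = I ⊕ Γ ⊕ ⋯ ⊕ Γ^{n−1} in the max-plus algebra. -/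
/-! Deleting a cycle from a path does not decrease its weight, because the cycle weighs at most `0`.
A path of length at least `n` visits `n + 1` vertices, two of which coincide by the pigeonhole
principle, so it contains a cycle; hence every path weight is dominated by the weight of a path of
length at most `n - 1`. There are finitely many such weights, so their maximum is attained. -/

section Paths

variable {N M : Type*} [AddCommMonoid M]

/-- The weight of the path `c 0, c 1, …, c m`. A path is encoded by a sequence `c : ℕ → N` together
with its length `m`; the values of `c` beyond `m` are irrelevant. -/
def pathWeight (Γ : N → N → M) (c : ℕ → N) (m : ℕ) : M :=
  ∑ k ∈ Finset.range m, Γ (c (k + 1)) (c k)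

/-- The weights of the paths of length exactly `m` from `j` to `i`. For `M = ℝ ∪ {−∞}` their
supremum is the entry `(Γ ^ m) i j` of the max-plus matrix power, hence the order of the indices. -/
def pathWeights (Γ : N → N → M) (i j : N) (m : ℕ) : Set M :=
  {w | ∃ c : ℕ → N, c 0 = j ∧ c m = i ∧ w = pathWeight Γ c m}

theorem pathWeight_congr (Γ : N → N → M) {c d : ℕ → N} {m : ℕ} (h : ∀ k ≤ m, c k = d k) :
    pathWeight Γ c m = pathWeight Γ d m :=
  Finset.sum_congr rfl fun k hk => by
    have hkm := Finset.mem_range.1 hk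
    rw [h k hkm.le, h (k + 1) hkm]

theorem pathWeight_add (Γ : N → N → M) (c : ℕ → N) (m l : ℕ) :
    pathWeight Γ c (m + l) = pathWeight Γ c m + pathWeight Γ (fun k => c (m + k)) l :=
  Finset.sum_range_add _ m l

theorem pathWeight_mem_pathWeights (Γ : N → N → M) (c : ℕ → N) (m : ℕ) :
    pathWeight Γ c m ∈ pathWeights Γ (c m) (c 0) m :=
  ⟨c, rfl, rfl, rfl⟩

theorem pathWeights_one_nonempty (Γ : N → N → M) (i j : N) : (pathWeights Γ i j 1).Nonempty :=
  ⟨_, fun k => if k = 0 then j else i, rfl, rfl, rfl⟩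

theorem add_mem_pathWeights {Γ : N → N → M} {i j k : N} {l m : ℕ} {v w : M}
    (hv : v ∈ pathWeights Γ k j m) (hw : w ∈ pathWeights Γ i k l) :
    v + w ∈ pathWeights Γ i j (m + l) := by
  obtain ⟨p, rfl, rfl, rfl⟩ := hv
  obtain ⟨q, hqp, rfl, rfl⟩ := hw
  let c : ℕ → N := fun r => if r ≤ m then p r else q (r - m)
  have c_left (r : ℕ) (hr : r ≤ m) : c r = p r := if_pos hr
  have c_right (r : ℕ) : c (m + r) = q r := by
    rcases r.eq_zero_or_pos with rfl | hr
    · exact (c_left m le_rfl).trans hqp.symm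
    · simp [c, hr.ne']
  refine ⟨c, c_left 0 m.zero_le, c_right l, ?_⟩
  rw [pathWeight_add, pathWeight_congr Γ c_left, pathWeight_congr Γ fun r _ => c_right r]

theorem finite_pathWeights [Finite N] (Γ : N → N → M) (i j : N) (m : ℕ) :
    (pathWeights Γ i j m).Finite := by
  induction m generalizing i with
  | zero =>
    refine (Set.finite_singleton 0).subset ?_
    rintro _ ⟨c, -, -, rfl⟩
    exact Finset.sum_range_zero _
  | succ m ih =>
    refine (Set.finite_iUnion fun k => (ih k).image (· + Γ i k)).subset ?_
    rintro _ ⟨c, rfl, rfl, rfl⟩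
    exact Set.mem_iUnion.2
      ⟨c m, _, pathWeight_mem_pathWeights Γ c m, (Finset.sum_range_succ _ m).symm⟩

end Paths

theorem exists_lt_map_eq_of_card_le {N : Type*} [Fintype N] (c : ℕ → N) {m : ℕ}
    (hm : Fintype.card N ≤ m) : ∃ a b, a < b ∧ b ≤ m ∧ c a = c b := by
  obtain ⟨x, y, hxy, hc⟩ := Fintype.exists_ne_map_eq_of_card_lt (fun k : Fin (m + 1) => c k)
    (by rw [Fintype.card_fin]; omega)
  rcases hxy.lt_or_gt with hlt | hlt
  · exact ⟨x, y, hlt, y.is_le, hc⟩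
  · exact ⟨y, x, hlt, x.is_le, hc.symm⟩

section NonposCycles

variable {N M : Type*} [AddCommMonoid M] {Γ : N → N → M}

theorem exists_pathWeight_le_of_cycle_nonpos [Preorder M] [IsOrderedAddMonoid M] {c : ℕ → N}
    {a d : ℕ} (hc : c a = c (a + d)) (hd : pathWeight Γ (fun k => c (a + k)) d ≤ 0) (e : ℕ) :
    ∃ w ∈ pathWeights Γ (c (a + d + e)) (c 0) (a + e), pathWeight Γ c (a + d + e) ≤ w := by
  have hprefix := pathWeight_mem_pathWeights Γ c a
  have hsuffix := pathWeight_mem_pathWeights Γ (fun k => c (a + d + k)) e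
  rw [hc] at hprefix
  refine ⟨_, add_mem_pathWeights hprefix hsuffix, ?_⟩
  rw [pathWeight_add, pathWeight_add]
  gcongr
  exact add_le_of_nonpos_right hd

/-- Every cycle of `Γ` has weight at most `0`, so that no path gains weight by going around a cycle.
A cycle is a path of length at least `1` that returns to its start. -/
def NonposCycles [LE M] (Γ : N → N → M) : Prop :=
  ∀ m, 1 ≤ m → ∀ c : ℕ → N, c m = c 0 → pathWeight Γ c m ≤ 0

variable [Fintype N]

theorem NonposCycles.exists_lt_length_le_weight [Preorder M] [IsOrderedAddMonoid M]
    (hΓ : NonposCycles Γ) {i j : N} {m : ℕ} (hm : Fintype.card N ≤ m) {w : M}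
    (hw : w ∈ pathWeights Γ i j m) : ∃ l < m, ∃ v ∈ pathWeights Γ i j l, w ≤ v := by
  obtain ⟨c, rfl, rfl, rfl⟩ := hw
  obtain ⟨a, b, hab, hbm, hc⟩ := exists_lt_map_eq_of_card_le c hm
  obtain ⟨d, rfl⟩ := Nat.exists_eq_add_of_le hab.le
  obtain ⟨e, rfl⟩ := Nat.exists_eq_add_of_le hbm
  have hcycle : pathWeight Γ (fun k => c (a + k)) d ≤ 0 := hΓ d (by omega) _ hc.symm
  exact ⟨a + e, by omega, exists_pathWeight_le_of_cycle_nonpos hc hcycle e⟩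

theorem NonposCycles.exists_length_le_card_sub_one_le_weight [Preorder M] [IsOrderedAddMonoid M]
    (hΓ : NonposCycles Γ) {i j : N} {m : ℕ} {w : M} (hw : w ∈ pathWeights Γ i j m) :
    ∃ l ≤ Fintype.card N - 1, ∃ v ∈ pathWeights Γ i j l, w ≤ v := by
  induction m using Nat.strong_induction_on generalizing w with
  | _ m ih =>
    rcases le_or_gt m (Fintype.card N - 1) with hm | hm
    · exact ⟨m, hm, w, hw, le_rfl⟩
    · obtain ⟨l, hl, v, hv, hwv⟩ := hΓ.exists_lt_length_le_weight (by omega) hw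
      obtain ⟨r, hr, u, hu, hvu⟩ := ih l hl hv
      exact ⟨r, hr, u, hu, hwv.trans hvu⟩

theorem maxplus_kleene_star_finite_general [LinearOrder M] [IsOrderedAddMonoid M]
    (hΓ : NonposCycles Γ) (i j : N) :
    ∃ v, IsLUB {w | ∃ m, w ∈ pathWeights Γ i j m} v ∧
      IsGreatest {w | ∃ m ≤ Fintype.card N - 1, w ∈ pathWeights Γ i j m} v := by
  set all := {w | ∃ m, w ∈ pathWeights Γ i j m}
  set short := {w | ∃ m ≤ Fintype.card N - 1, w ∈ pathWeights Γ i j m}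
  have hsub : short ⊆ all := fun _ ⟨m, _, hw⟩ => ⟨m, hw⟩
  have hcofinal : IsCofinalFor all short := by
    rintro w ⟨m, hw⟩
    obtain ⟨l, hl, v, hv, hwv⟩ := hΓ.exists_length_le_card_sub_one_le_weight hw
    exact ⟨v, ⟨l, hl, hv⟩, hwv⟩
  have hfinite : short.Finite :=
    ((Set.finite_Iic (Fintype.card N - 1)).biUnion fun m _ => finite_pathWeights Γ i j m).subset
      fun _ ⟨_, hm, hw⟩ => Set.mem_biUnion hm hw
  have hnonempty : short.Nonempty :=
    hcofinal.nonempty ((pathWeights_one_nonempty Γ i j).mono fun _ hw => ⟨1, hw⟩)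
  obtain ⟨v, hv, hmax⟩ := Set.exists_max_image short id hfinite hnonempty
  have hall : IsGreatest all v := ⟨hsub hv, upperBounds_mono_of_isCofinalFor hcofinal hmax⟩
  exact ⟨v, hall.isLUB, hv, hmax⟩

end NonposCycles

/-- **The Kleene star `Γ* = I ⊕ Γ ⊕ Γ² ⊕ ⋯` reduces to `I ⊕ Γ ⊕ ⋯ ⊕ Γ^{n−1}`.**
Work in the max-plus algebra over `ℝ ∪ {−∞}` (= `WithBot ℝ`): `⊕` is the binary
maximum, `⊗` is ordinary addition with `−∞` absorbing.  Let `N` be a finite type of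
cardinality `n ≥ 1` and `Γ : N → N → WithBot ℝ` a matrix such that every cycle has
weight at most `0`.  Paths from `j` to `i` are sequences `j = c 0, c 1, …, c m = i`
with weight `∑_{k<m} Γ (c (k+1)) (c k)` and length `m`; the length-`0` path from `j`
to `j` has weight `0`, accounting for the summand `I` of `Γ*` (the `0` added on the
diagonal).  Then for all `i, j`, the supremum over ALL paths from `j` to `i` of the
path weight equals the maximum — attained — over paths from `j` to `i` of length at
most `n − 1` (both being `−∞` if no path exists): there is a `v` that is the least
upper bound of all path weights and the greatest element of the set of weights of
paths of length at most `n − 1`. -/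
theorem maxplus_kleene_star_finite {N : Type*} [Fintype N]
    (n : ℕ) (hn : n = Fintype.card N) (hn1 : 1 ≤ n)
    (Γ : N → N → WithBot ℝ)
    (hcyc : ∀ (m : ℕ), 1 ≤ m → ∀ c : ℕ → N, c m = c 0 →
      (∑ k ∈ Finset.range m, Γ (c (k + 1)) (c k)) ≤ 0) :
    ∀ i j : N, ∃ v : WithBot ℝ,
      IsLUB {w : WithBot ℝ | ∃ (m : ℕ) (c : ℕ → N), c 0 = j ∧ c m = i ∧
          w = ∑ k ∈ Finset.range m, Γ (c (k + 1)) (c k)} v ∧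
      IsGreatest {w : WithBot ℝ | ∃ m : ℕ, m ≤ n - 1 ∧ ∃ c : ℕ → N, c 0 = j ∧ c m = i ∧
          w = ∑ k ∈ Finset.range m, Γ (c (k + 1)) (c k)} v := by
  subst hn
  exact maxplus_kleene_star_finite_general hcyc
end
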